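/- Every Cohen–Macaulay Λ-module M is isomorphic to a finite direct sum ⊕_{1 ≤ i < j ≤ n} (i,j)^{l_{ij}} for some non-negative integers l_{ij}, and the multiplicities l_{ij} are uniquely determined by the isomorphism class of M. -/

import Mathlib

set_option synthInstance.maxHeartbeats 1000000
set_option maxHeartbeats 1000000

open Polynomial Matrix

noncomputable section

/-- The exponent `c_{ij}` (with 0-based indices `i j : Fin n`, corresponding to the 1-based
`c_{i+1,j+1} = δ_{i+1>j+1} + δ_{i+1>j+2} − δ_{(i+1,j+1)=(1,n)}`). -/
def cExp (n : ℕ) (i j : Fin n) : ℤ :=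
  (if (j : ℕ) < (i : ℕ) then 1 else 0) + (if (j : ℕ) + 1 < (i : ℕ) then 1 else 0)
    - (if (i : ℕ) = 0 ∧ (j : ℕ) = n - 1 then 1 else 0)

/-- The subset `x^c · K[x]` of `K(x)`. -/
def xPow (K : Type*) [Field K] (c : ℤ) : Set (RatFunc K) :=
  {f | ∃ p : Polynomial K, f = RatFunc.X ^ c * algebraMap (Polynomial K) (RatFunc K) p}

/-- The carrier set of the tiled order `Λ ⊆ M_n(K(x))`:
matrices whose `(i,j)` entry lies in `x^{c_{ij}}·K[x]`. -/
def lambdaCarrier (K : Type*) [Field K] (n : ℕ) : Set (Matrix (Fin n) (Fin n) (RatFunc K)) :=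
  {M | ∀ i j, M i j ∈ xPow K (cExp n i j)}

/-- Exponent pattern of the module `(i,j)` (1-based `i j`; `k : ℕ` is a 0-based coordinate,
so the 1-based coordinate is `k+1`): `0` for `k+1 ≤ i`, `1` for `i < k+1 ≤ j`, `2` otherwise. -/
def dExp (i j k : ℕ) : ℤ := if k + 1 ≤ i then 0 else if k + 1 ≤ j then 1 else 2

/-- The carrier set of the `Λ`-module `(i,j)` inside the column space `K(x)^n`. -/
def ijSet (K : Type*) [Field K] (n : ℕ) (i j : ℕ) : Set (Fin n → RatFunc K) :=
  {v | ∀ k : Fin n, v k ∈ xPow K (dExp i j (k : ℕ))}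

/-- Column vectors form a module over the matrix ring via `mulVec`. -/
instance matVecModule (K : Type*) [Field K] (n : ℕ) :
    Module (Matrix (Fin n) (Fin n) (RatFunc K)) (Fin n → RatFunc K) where
  smul M v := M.mulVec v
  one_smul v := Matrix.one_mulVec v
  mul_smul M N v := (Matrix.mulVec_mulVec v M N).symm
  smul_zero M := Matrix.mulVec_zero M
  smul_add M u v := Matrix.mulVec_add M u v
  add_smul M N v := Matrix.add_mulVec M N v
  zero_smul v := Matrix.zero_mulVec v

open DirectSum

universe u

/-!
Write `e_{ij}` for the matrix units, counted from `0`. A Cohen–Macaulay module `M` is encoded by the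
free `K[x]`-module `L = e_{00} M` and the chain of submodules `N k = e_{0k} M`, which satisfies
`L = N 0 ⊇ N 1 ⊇ ⋯ ⊇ N (n - 1)`, `x N k ⊆ N (k + 1)`, `x² L ⊆ N k` and `N (n - 1) ⊆ x L`.
Decomposing `M` into modules `(i, j)` means finding a basis of `L` that is adapted to the chain:
every `N k` is spanned by the basis vectors scaled by `1`, `x` or `x²`. Choose a basis `v` and
levels `a`, `b` with `v t ∈ N (a t)` and `x v t ∈ N (b t)` such that the sum of all levels is
maximal. This basis is adapted, for an element of some `N k` violating this would yield a
replacement of a single basis vector that raises the sum.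

A homomorphism from `(i, j)` to `(i', j')` is multiplication by a polynomial, whose constant term
vanishes unless `i ≤ i'` and `j ≤ j'`. The matrices of an isomorphism between two direct sums and of
its inverse are therefore triangular modulo `x` for this partial order. So their diagonal blocks are
mutually inverse, hence square, and the multiplicities agree.
-/

section LatticeChain

variable {R L ι : Type*} [CommRing R] [AddCommGroup L] [Module R L] {r : ℕ} {ϖ : R}
  {N : Fin (r + 1) → Submodule R L}

lemma basis_det_update_self [Fintype ι] [DecidableEq ι] (v : Module.Basis ι R L) (t : ι) (w : L) :
    v.det (Function.update v t w) = v.repr w t := by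
  rw [Module.Basis.det_apply, Module.Basis.toMatrix_update, Module.Basis.toMatrix_self,
    ← Matrix.cramer_apply, Matrix.cramer_one, Module.End.one_apply]

lemma exists_basis_eq_update [Finite ι] [DecidableEq ι] (v : Module.Basis ι R L) {t : ι} {w : L}
    (hw : IsUnit (v.repr w t)) :
    ∃ v' : Module.Basis ι R L, ⇑v' = Function.update v t w := by
  have := Fintype.ofFinite ι
  rw [← basis_det_update_self v t w, ← v.is_basis_iff_det] at hw
  exact ⟨.mk hw.1 hw.2.ge, Module.Basis.coe_mk _ _⟩

lemma sum_smul_basis_mem [Fintype ι] (v : Module.Basis ι R L) {S : Submodule R L} {w : L}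
    (hw : w ∈ S) {q : ι → R} (hq : ∀ t, (q t - v.repr w t) • v t ∈ S) :
    ∑ t, q t • v t ∈ S := by
  have hsum : ∑ t, q t • v t = ∑ t, (q t - v.repr w t) • v t + w := by
    simp only [sub_smul, Finset.sum_sub_distrib, v.sum_repr, sub_add_cancel]
  rw [hsum]
  exact S.add_mem (S.sum_mem fun t _ => hq t) hw

lemma exists_pow_dvd_one_sub_mul (hϖ : (Ideal.span {ϖ}).IsMaximal) (m : ℕ) {c : R}
    (hc : ¬ ϖ ∣ c) : ∃ u, ϖ ^ m ∣ 1 - u * c := by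
  obtain ⟨u, i, hi, hu⟩ := Ideal.IsMaximal.exists_inv_pow _ (mt Ideal.mem_span_singleton.1 hc) m
  rw [Ideal.span_singleton_pow, Ideal.mem_span_singleton] at hi
  exact ⟨u, by rwa [← hu, add_sub_cancel_left]⟩

/-- The exponent at position `k` of the staircase with a step at each of the two entries of `p`;
for `p = (a, b)` this is the exponent pattern of the module `(a + 1, b + 1)`, all positions being
counted from `0`. -/
def level {α : Type*} [LinearOrder α] (p : α × α) (k : α) : ℕ :=
  if k ≤ p.1 then 0 else if k ≤ p.2 then 1 else 2

/-- The chains `L = N 0 ⊇ N 1 ⊇ ⋯ ⊇ N r` of submodules that encode the Cohen–Macaulay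
`Λ`-modules `M`, where `N k` is the `k`-th component of `M` moved into the `0`-th one. -/
structure IsLatticeChain (ϖ : R) (N : Fin (r + 1) → Submodule R L) : Prop where
  antitone : Antitone N
  zero_eq_top : N 0 = ⊤
  smul_mem_succ : ∀ (k : Fin r) {w : L}, w ∈ N k.castSucc → ϖ • w ∈ N k.succ
  sq_smul_mem : ∀ (k : Fin (r + 1)) (w : L), ϖ ^ 2 • w ∈ N k
  exists_eq_smul_of_mem_last : ∀ {w : L}, w ∈ N (Fin.last r) → ∃ u, w = ϖ • u

/-- The basis `v` has levels at least `f`, and no replacement of a single basis vector raises the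
sum of its two levels. -/
structure IsLevelMaximal (ϖ : R) (N : Fin (r + 1) → Submodule R L) (v : Module.Basis ι R L)
    (f : ι → Fin (r + 1) × Fin (r + 1)) : Prop where
  mem : ∀ t, v t ∈ N (f t).1
  smul_mem : ∀ t, ϖ • v t ∈ N (f t).2
  add_le_add : ∀ (t : ι) {w : L} {i j : Fin (r + 1)}, w ∈ N i → ϖ • w ∈ N j →
    IsUnit (v.repr w t) → (i : ℕ) + j ≤ (f t).1 + (f t).2

namespace IsLatticeChain

lemma exists_isLevelMaximal [Finite ι] (hN : IsLatticeChain ϖ N) (v₀ : Module.Basis ι R L) :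
    ∃ (v : Module.Basis ι R L) (f : ι → Fin (r + 1) × Fin (r + 1)), IsLevelMaximal ϖ N v f := by
  classical
  have := Fintype.ofFinite ι
  let S : Set (ι → Fin (r + 1) × Fin (r + 1)) :=
    {f | ∃ v : Module.Basis ι R L, ∀ t, v t ∈ N (f t).1 ∧ ϖ • v t ∈ N (f t).2}
  have hS : S.Nonempty := ⟨fun _ => (0, 0), v₀, fun t => by simp [hN.zero_eq_top]⟩
  obtain ⟨f, ⟨v, hv⟩, hmax⟩ := S.exists_max_image
    (fun f => ∑ t, ((f t).1 + (f t).2 : ℕ)) S.toFinite hS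
  refine ⟨v, f, fun t => (hv t).1, fun t => (hv t).2, fun t w i j hi hj hw => ?_⟩
  by_contra! hlt
  obtain ⟨v', hv'⟩ := exists_basis_eq_update v hw
  have hmem : Function.update f t (i, j) ∈ S := by
    refine ⟨v', fun s => ?_⟩
    obtain rfl | hs := eq_or_ne s t
    · simpa [hv'] using ⟨hi, hj⟩
    · simpa [hv', hs] using hv s
  refine (hmax _ hmem).not_gt (Finset.sum_lt_sum (fun s _ => ?_) ⟨t, Finset.mem_univ t, by simpa⟩)
  obtain rfl | hs := eq_or_ne s t
  · simpa using hlt.le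
  · simp [hs]

end IsLatticeChain

namespace IsLevelMaximal

variable {v : Module.Basis ι R L} {f : ι → Fin (r + 1) × Fin (r + 1)}

lemma smul_mem_of_pow_level_dvd (hN : IsLatticeChain ϖ N) (hv : IsLevelMaximal ϖ N v f) {t : ι}
    {k : Fin (r + 1)} {c : R} (hc : ϖ ^ level (f t) k ∣ c) : c • v t ∈ N k := by
  obtain ⟨d, rfl⟩ := hc
  rw [mul_comm, mul_smul]
  refine (N k).smul_mem d ?_
  unfold level
  split_ifs with h₁ h₂
  · simpa using hN.antitone h₁ (hv.mem t)
  · simpa using hN.antitone h₂ (hv.smul_mem t)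
  · exact hN.sq_smul_mem k _

lemma smul_mem_of_le_fst (hN : IsLatticeChain ϖ N) (hv : IsLevelMaximal ϖ N v f) {t : ι}
    {k : Fin (r + 1)} (hk : k ≤ (f t).1) (c : R) : c • v t ∈ N k :=
  hv.smul_mem_of_pow_level_dvd hN (by simp [level, hk])

lemma smul_mem_of_le_snd (hN : IsLatticeChain ϖ N) (hv : IsLevelMaximal ϖ N v f) {t : ι}
    {k : Fin (r + 1)} (hk : k ≤ (f t).2) {c : R} (hc : ϖ ∣ c) : c • v t ∈ N k :=
  hv.smul_mem_of_pow_level_dvd hN <| by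
    unfold level
    split_ifs <;> simp [hc]

lemma smul_mem_of_sq_dvd (hN : IsLatticeChain ϖ N) (hv : IsLevelMaximal ϖ N v f) (t : ι)
    (k : Fin (r + 1)) {c : R} (hc : ϖ ^ 2 ∣ c) : c • v t ∈ N k :=
  hv.smul_mem_of_pow_level_dvd hN <| (pow_dvd_pow ϖ (by unfold level; split_ifs <;> lia)).trans hc

lemma fst_lt_snd (hN : IsLatticeChain ϖ N) (hv : IsLevelMaximal ϖ N v f) (hϖ : ¬ IsUnit ϖ)
    (t : ι) : (f t).1 < (f t).2 := by
  have hone : v.repr (v t) t = 1 := by simp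
  rcases Fin.eq_castSucc_or_eq_last (f t).1 with ⟨k, hk⟩ | hlast
  · have hle := hv.add_le_add t (hv.mem t) (hN.smul_mem_succ k (hk ▸ hv.mem t)) (hone ▸ isUnit_one)
    rw [Fin.val_succ] at hle
    rw [hk, Fin.lt_def, Fin.val_castSucc]
    lia
  · obtain ⟨u, hu⟩ := hN.exists_eq_smul_of_mem_last (hlast ▸ hv.mem t)
    rw [hu, map_smul, Finsupp.smul_apply, smul_eq_mul] at hone
    exact absurd (.of_mul_eq_one _ hone) hϖ

lemma add_le_add_of_not_dvd [Finite ι] (hN : IsLatticeChain ϖ N) (hv : IsLevelMaximal ϖ N v f)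
    (hϖ : (Ideal.span {ϖ}).IsMaximal) {w : L} {i j : Fin (r + 1)} (hi : w ∈ N i)
    (hj : ϖ • w ∈ N j) {t : ι} (ht : ¬ ϖ ∣ v.repr w t) : (i : ℕ) + j ≤ (f t).1 + (f t).2 := by
  obtain ⟨u, hu⟩ := exists_pow_dvd_one_sub_mul hϖ 2 ht
  have hunit : IsUnit (v.repr (u • w + (1 - u * v.repr w t) • v t) t) := by simp
  refine hv.add_le_add t ?_ ?_ hunit
  · exact (N i).add_mem ((N i).smul_mem u hi) (hv.smul_mem_of_sq_dvd hN t i hu)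
  · rw [smul_add, smul_comm, ← mul_smul ϖ (1 - _)]
    exact (N j).add_mem ((N j).smul_mem u hj) (hv.smul_mem_of_sq_dvd hN t j (hu.mul_left ϖ))

variable [Finite ι]

/-- Among the positions violating the claim choose `t₀` with least second level. The part of `w`
supported on the positions `s` with `(f s).1 < k` could then replace `v t₀`. -/
lemma dvd_repr_of_fst_lt (hN : IsLatticeChain ϖ N) (hv : IsLevelMaximal ϖ N v f)
    (hϖ : (Ideal.span {ϖ}).IsMaximal) {k : Fin (r + 1)} {w : L} (hw : w ∈ N k) {t : ι}
    (ht : (f t).1 < k) : ϖ ∣ v.repr w t := by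
  have := Fintype.ofFinite ι
  by_contra hndvd
  obtain ⟨t₀, ⟨hlt, hndvd₀⟩, hmin⟩ := Set.exists_min_image
    {t | (f t).1 < k ∧ ¬ ϖ ∣ v.repr w t} (fun t => (f t).2) (Set.toFinite _) ⟨t, ht, hndvd⟩
  let q : ι → R := fun s => if (f s).1 < k then v.repr w s else 0
  have hmem : ∑ s, q s • v s ∈ N k := by
    refine sum_smul_basis_mem v hw fun s => ?_
    by_cases hs : (f s).1 < k
    · simp [q, hs]
    · exact hv.smul_mem_of_le_fst hN (not_lt.1 hs) _
  have hsmul : ϖ • ∑ s, q s • v s ∈ N (f t₀).2 := by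
    simp only [Finset.smul_sum, ← mul_smul]
    refine (N _).sum_mem fun s _ => ?_
    by_cases hs : (f s).1 < k
    · by_cases hdvd : ϖ ∣ v.repr w s
      · refine hv.smul_mem_of_sq_dvd hN s _ ?_
        simpa [q, hs, pow_two] using mul_dvd_mul_left ϖ hdvd
      · exact hv.smul_mem_of_le_snd hN (hmin s ⟨hs, hdvd⟩) (dvd_mul_right ϖ _)
    · simp [q, hs]
  have hle := hv.add_le_add_of_not_dvd hN hϖ hmem hsmul (t := t₀) (by
    rwa [v.repr_sum_self, show q t₀ = v.repr w t₀ from if_pos hlt])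
  rw [Fin.lt_def] at hlt
  lia

/-- Among the positions violating the claim choose `t₀` with least first level. The part of `w`
supported on the violating positions, divided by `ϖ`, could then replace `v t₀`. -/
lemma sq_dvd_repr_of_snd_lt (hN : IsLatticeChain ϖ N) (hv : IsLevelMaximal ϖ N v f)
    (hϖ : (Ideal.span {ϖ}).IsMaximal) {k : Fin (r + 1)} {w : L} (hw : w ∈ N k) {t : ι}
    (ht : (f t).2 < k) : ϖ ^ 2 ∣ v.repr w t := by
  classical
  have := Fintype.ofFinite ι
  by_contra hndvd
  let V : Set ι := {t | (f t).2 < k ∧ ¬ ϖ ^ 2 ∣ v.repr w t}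
  obtain ⟨t₀, ht₀, hmin⟩ := V.exists_min_image (fun t => (f t).1) V.toFinite ⟨t, ht, hndvd⟩
  have hdvd : ∀ s, (f s).1 < k → ϖ ∣ v.repr w s := fun s => hv.dvd_repr_of_fst_lt hN hϖ hw
  have hlt : ∀ s, (f s).1 < (f s).2 :=
    hv.fst_lt_snd hN (mt Ideal.span_singleton_eq_top.2 hϖ.ne_top)
  choose! c hc using fun s (hs : s ∈ V) => hdvd s ((hlt s).trans hs.1)
  let q : ι → R := fun s => if s ∈ V then c s else 0
  have hmem : ∑ s, q s • v s ∈ N (f t₀).1 := by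
    refine (N _).sum_mem fun s _ => ?_
    by_cases hs : s ∈ V
    · exact hv.smul_mem_of_le_fst hN (hmin s hs) _
    · simp [q, hs]
  have hsmul : ϖ • ∑ s, q s • v s ∈ N k := by
    simp only [Finset.smul_sum, ← mul_smul]
    refine sum_smul_basis_mem v hw fun s => ?_
    by_cases hs : s ∈ V
    · simp [q, hs, ← hc s hs]
    rw [show q s = 0 from if_neg hs, mul_zero, zero_sub]
    rcases lt_or_ge (f s).2 k with hk | hk
    · exact hv.smul_mem_of_sq_dvd hN s k (dvd_neg.2 (not_not.1 fun h => hs ⟨hk, h⟩))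
    rcases lt_or_ge (f s).1 k with hk' | hk'
    · exact hv.smul_mem_of_le_snd hN hk (dvd_neg.2 (hdvd s hk'))
    · exact hv.smul_mem_of_le_fst hN hk' _
  have hndvd₀ : ¬ ϖ ∣ v.repr (∑ s, q s • v s) t₀ := by
    rw [v.repr_sum_self, show q t₀ = c t₀ from if_pos ht₀]
    exact fun h => ht₀.2 (by rw [hc t₀ ht₀, pow_two]; exact mul_dvd_mul_left ϖ h)
  have hle := hv.add_le_add_of_not_dvd hN hϖ hmem hsmul hndvd₀
  have := Fin.lt_def.1 ht₀.1
  lia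

lemma mem_iff_pow_level_dvd_repr (hN : IsLatticeChain ϖ N) (hv : IsLevelMaximal ϖ N v f)
    (hϖ : (Ideal.span {ϖ}).IsMaximal) {k : Fin (r + 1)} {w : L} :
    w ∈ N k ↔ ∀ t, ϖ ^ level (f t) k ∣ v.repr w t := by
  refine ⟨fun hw t => ?_, fun hdvd => ?_⟩
  · unfold level
    split_ifs with h₁ h₂
    · simp
    · simpa using hv.dvd_repr_of_fst_lt hN hϖ hw (not_le.1 h₁)
    · exact hv.sq_dvd_repr_of_snd_lt hN hϖ hw (not_le.1 h₂)
  · have := Fintype.ofFinite ι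
    rw [← v.sum_repr w]
    exact (N k).sum_mem fun t _ => hv.smul_mem_of_pow_level_dvd hN (hdvd t)

end IsLevelMaximal

theorem IsLatticeChain.exists_adapted_basis [Finite ι] (hN : IsLatticeChain ϖ N)
    (hϖ : (Ideal.span {ϖ}).IsMaximal) (v₀ : Module.Basis ι R L) :
    ∃ (v : Module.Basis ι R L) (f : ι → Fin (r + 1) × Fin (r + 1)), (∀ t, (f t).1 < (f t).2) ∧
      ∀ (k : Fin (r + 1)) (w : L), w ∈ N k ↔ ∀ t, ϖ ^ level (f t) k ∣ v.repr w t := by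
  have hunit : ¬ IsUnit ϖ := mt Ideal.span_singleton_eq_top.2 hϖ.ne_top
  obtain ⟨v, f, hv⟩ := hN.exists_isLevelMaximal v₀
  exact ⟨v, f, hv.fst_lt_snd hN hunit, fun _ _ => hv.mem_iff_pow_level_dvd_repr hN hϖ⟩

end LatticeChain

section Counting

variable {R S T α : Type*} [Semiring R] [PartialOrder α] {f : T → α} {g : S → α}

lemma submatrix_fiber_mul_submatrix_fiber [Fintype S] [DecidableEq T] [DecidableEq α]
    {P : Matrix T S R} {Q : Matrix S T R} (hPQ : P * Q = 1) (hP : ∀ t s, P t s ≠ 0 → f t ≤ g s)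
    (hQ : ∀ s t, Q s t ≠ 0 → g s ≤ f t) (p : α) :
    P.submatrix (Subtype.val : {t // f t = p} → T) (Subtype.val : {s // g s = p} → S) *
      Q.submatrix (Subtype.val : {s // g s = p} → S) (Subtype.val : {t // f t = p} → T) = 1 := by
  ext t t'
  have h : (P * Q) t t' = (1 : Matrix T T R) t t' := by rw [hPQ]
  rw [Matrix.mul_apply] at h ⊢
  simp only [Matrix.submatrix_apply]
  rw [← Finset.sum_subtype (Finset.univ.filter fun s => g s = p) (by simp)
    (fun s => P t s * Q s t'), Finset.sum_filter_of_ne, h]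
  · simp only [Matrix.one_apply, Subtype.ext_iff]
  · intro s _ hs
    have hle : f t ≤ g s := hP t s (left_ne_zero_of_mul hs)
    have hge : g s ≤ f t' := hQ s t' (right_ne_zero_of_mul hs)
    rw [t.2] at hle
    rw [t'.2] at hge
    exact le_antisymm hge hle

lemma card_fiber_eq_of_triangular [InvariantBasisNumber R] [Fintype T] [Fintype S]
    [DecidableEq T] [DecidableEq S] [DecidableEq α] {P : Matrix T S R} {Q : Matrix S T R}
    (hPQ : P * Q = 1) (hQP : Q * P = 1) (hP : ∀ t s, P t s ≠ 0 → f t ≤ g s)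
    (hQ : ∀ s t, Q s t ≠ 0 → g s ≤ f t) (p : α) :
    Fintype.card {t // f t = p} = Fintype.card {s // g s = p} :=
  Matrix.square_of_invertible _ _ (submatrix_fiber_mul_submatrix_fiber hPQ hP hQ p)
    (submatrix_fiber_mul_submatrix_fiber hQP hQ hP p)

end Counting

section Multiplicities

variable {R I T : Type*} [Semiring R] [Fintype I] [DecidableEq I]

/-- Collects equal factors of a finite product: `l p` is the number of factors `N p`. -/
def piEquivDirectSum [Fintype T] (N : I → Type*) [∀ p, AddCommMonoid (N p)] [∀ p, Module R (N p)]
    (f : T → I) (l : I → ℕ) (hl : ∀ p, Fintype.card {t // f t = p} = l p) :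
    (Π t, N (f t)) ≃ₗ[R] ⨁ p, (Fin (l p) → N p) :=
  (LinearEquiv.piCongrLeft R (fun t => N (f t)) (Equiv.sigmaFiberEquiv f)).symm ≪≫ₗ
    LinearEquiv.piCongrRight (fun s => LinearEquiv.cast (M := N) s.2.2) ≪≫ₗ
    LinearEquiv.piCurry R (fun p (_ : {t // f t = p}) => N p) ≪≫ₗ
    LinearEquiv.piCongrRight (fun p =>
      LinearEquiv.funCongrLeft R (N p) (Fintype.equivFinOfCardEq (hl p)).symm) ≪≫ₗ
    (DirectSum.linearEquivFunOnFintype R I fun p => Fin (l p) → N p).symm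

lemma card_fiber_sigma_fst (l : I → ℕ) (p : I) :
    Fintype.card {s : (Σ p, Fin (l p)) // s.1 = p} = l p := by
  rw [Fintype.card_congr (Equiv.sigmaSubtype p), Fintype.card_fin]

end Multiplicities

section TiledOrder

variable {K : Type*} [Field K] {r : ℕ}

lemma X_zpow_mem_xPow {c d : ℤ} (h : c ≤ d) : (RatFunc.X ^ d : RatFunc K) ∈ xPow K c := by
  obtain ⟨e, rfl⟩ := Int.le.dest h
  exact ⟨X ^ e, by simp [zpow_add₀ (RatFunc.X_ne_zero (K := K))]⟩

lemma mem_xPow_natCast {d : ℕ} {f : RatFunc K} :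
    f ∈ xPow K d ↔ ∃ q : K[X], X ^ d ∣ q ∧ f = algebraMap K[X] (RatFunc K) q := by
  constructor
  · rintro ⟨p, rfl⟩
    exact ⟨X ^ d * p, Dvd.intro _ rfl, by simp⟩
  · rintro ⟨_, ⟨p, rfl⟩, rfl⟩
    exact ⟨p, by simp⟩

lemma exists_algebraMap_eq_X_mul {c : ℤ} (hc : -1 ≤ c) {f : RatFunc K} (hf : f ∈ xPow K c) :
    ∃ q : K[X], algebraMap K[X] (RatFunc K) q = RatFunc.X * f := by
  obtain ⟨p, rfl⟩ := hf
  obtain ⟨e, rfl⟩ := Int.le.dest hc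
  refine ⟨X ^ e * p, ?_⟩
  rw [← mul_assoc, ← zpow_one_add₀ RatFunc.X_ne_zero, add_neg_cancel_left]
  simp

lemma dExp_eq_level (p : Fin (r + 1) × Fin (r + 1)) (k : Fin (r + 1)) :
    dExp (p.1 + 1) (p.2 + 1) k = level p k := by
  simp only [dExp, level, Fin.le_def, add_le_add_iff_right]
  split_ifs <;> rfl

lemma cExp_nonpos_of_le {i j : Fin (r + 1)} (h : i ≤ j) : cExp (r + 1) i j ≤ 0 := by
  rw [Fin.le_def] at h
  unfold cExp
  split_ifs <;> lia

lemma cExp_succ_castSucc_le (k : Fin r) : cExp (r + 1) k.succ k.castSucc ≤ 1 := by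
  simp [cExp]

lemma cExp_le_two (i j : Fin (r + 1)) : cExp (r + 1) i j ≤ 2 := by
  unfold cExp
  split_ifs <;> lia

lemma neg_one_le_cExp (i j : Fin (r + 1)) : -1 ≤ cExp (r + 1) i j := by
  unfold cExp
  split_ifs <;> lia

lemma cExp_zero_last_le : cExp (r + 1) 0 (Fin.last r) ≤ -1 := by
  simp [cExp]

variable {Λ : Subalgebra K[X] (Matrix (Fin (r + 1)) (Fin (r + 1)) (RatFunc K))}

lemma coe_polynomial_smul_apply (p : K[X]) (x : Λ) (i j : Fin (r + 1)) :
    ((p • x : Λ) : Matrix _ _ (RatFunc K)) i j =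
      algebraMap K[X] (RatFunc K) p * (x : Matrix _ _ (RatFunc K)) i j := by
  rw [← Algebra.smul_def]
  rfl

variable (hΛ : (Λ : Set (Matrix _ _ (RatFunc K))) = lambdaCarrier K (r + 1))

include hΛ in
lemma single_mem_of_mem_xPow {i j : Fin (r + 1)} {f : RatFunc K}
    (hf : f ∈ xPow K (cExp (r + 1) i j)) : Matrix.single i j f ∈ Λ := by
  rw [← SetLike.mem_coe, hΛ]
  intro i' j'
  rw [Matrix.single_apply]
  split_ifs with h
  · rwa [← h.1, ← h.2]
  · exact ⟨0, by simp⟩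

/-- The element `x ^ d • e_{ij}` of `Λ`, where `e_{ij}` is the usual matrix unit. -/
def matrixUnit (i j : Fin (r + 1)) (d : ℤ) (h : cExp (r + 1) i j ≤ d) : Λ :=
  ⟨Matrix.single i j (RatFunc.X ^ d), single_mem_of_mem_xPow hΛ (X_zpow_mem_xPow h)⟩

/-- The element `e_{0k}` of `Λ`, which moves the `k`-th component of a `Λ`-module into the `0`-th
one. -/
def firstRowUnit (k : Fin (r + 1)) : Λ :=
  matrixUnit hΛ 0 k 0 (cExp_nonpos_of_le k.zero_le)

@[simp]
lemma coe_matrixUnit {i j : Fin (r + 1)} {d : ℤ} (h : cExp (r + 1) i j ≤ d) :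
    (matrixUnit hΛ i j d h : Matrix _ _ (RatFunc K)) = Matrix.single i j (RatFunc.X ^ d) :=
  rfl

@[simp]
lemma coe_firstRowUnit (k : Fin (r + 1)) :
    (firstRowUnit hΛ k : Matrix _ _ (RatFunc K)) =
      Matrix.single (0 : Fin (r + 1)) k 1 := by
  simp [firstRowUnit]

lemma firstRowUnit_zero_mul (k : Fin (r + 1)) :
    firstRowUnit hΛ 0 * firstRowUnit hΛ k = firstRowUnit hΛ k :=
  Subtype.ext (by simp)

lemma firstRowUnit_mul_matrixUnit (k j : Fin (r + 1)) (d : ℕ) (h : cExp (r + 1) k j ≤ d) :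
    firstRowUnit hΛ k * matrixUnit hΛ k j d h = (X ^ d : K[X]) • firstRowUnit hΛ j := by
  ext i i'
  simp [coe_polynomial_smul_apply, Matrix.single_apply]

lemma firstRowUnit_mul_matrixUnit_of_ne {i j k : Fin (r + 1)} (hki : k ≠ i) {d : ℤ}
    (h : cExp (r + 1) i j ≤ d) : firstRowUnit hΛ k * matrixUnit hΛ i j d h = 0 :=
  Subtype.ext (by simp [hki])

lemma X_smul_firstRowUnit_zero_mul :
    (X : K[X]) • (firstRowUnit hΛ 0 * matrixUnit hΛ 0 (Fin.last r) (-1) cExp_zero_last_le) =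
      firstRowUnit hΛ (Fin.last r) := by
  ext i j
  simp [coe_polynomial_smul_apply, Matrix.single_apply,
    mul_inv_cancel₀ (RatFunc.X_ne_zero (K := K))]

lemma X_sq_smul_one_eq_sum :
    (X ^ 2 : K[X]) • (1 : Λ) =
      ∑ k, matrixUnit hΛ k 0 2 (cExp_le_two _ _) * firstRowUnit hΛ k := by
  ext i j
  rw [coe_polynomial_smul_apply]
  simp [Matrix.sum_apply, Matrix.single_apply, Matrix.one_apply, ite_and]

include hΛ in
lemma coe_apply_mem_xPow (x : Λ) (i j : Fin (r + 1)) :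
    (x : Matrix _ _ (RatFunc K)) i j ∈ xPow K (cExp (r + 1) i j) := by
  have hx := SetLike.mem_coe.2 x.2
  rw [hΛ] at hx
  exact hx i j

/-- The entries of `x` may have a pole of order one, so only `X • e_{0k} x` is a combination of the
`e_{0j}` with polynomial coefficients. -/
lemma exists_X_smul_firstRowUnit_mul (k : Fin (r + 1)) (x : Λ) :
    ∃ q : Fin (r + 1) → K[X],
      (∀ j, algebraMap K[X] (RatFunc K) (q j) = RatFunc.X * (x : Matrix _ _ (RatFunc K)) k j) ∧
      (X : K[X]) • (firstRowUnit hΛ k * x) = ∑ j, q j • firstRowUnit hΛ j := by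
  choose q hq using fun j =>
    exists_algebraMap_eq_X_mul (neg_one_le_cExp k j) (coe_apply_mem_xPow hΛ x k j)
  refine ⟨q, hq, ?_⟩
  ext i j
  rw [coe_polynomial_smul_apply, AddSubmonoidClass.coe_finsetSum, Matrix.sum_apply]
  simp [coe_polynomial_smul_apply, hq, Matrix.mul_apply, Matrix.single_apply, ite_and]

end TiledOrder

section Existence

variable {K : Type*} [Field K] {r : ℕ}
  {Λ : Subalgebra K[X] (Matrix (Fin (r + 1)) (Fin (r + 1)) (RatFunc K))}

lemma coe_smul_apply (x : Λ) (v : Fin (r + 1) → RatFunc K) (k : Fin (r + 1)) :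
    (x • v) k = ∑ j, (x : Matrix _ _ (RatFunc K)) k j * v j :=
  rfl

/-- The modules `(i, j)`, indexed by pairs of positions counted from `0`. The carrier is prescribed
only for the pairs `p` with `p.1 < p.2`. -/
def IsPairFamily (N : Fin (r + 1) × Fin (r + 1) → Submodule Λ (Fin (r + 1) → RatFunc K)) : Prop :=
  ∀ p, p.1 < p.2 → (N p : Set (Fin (r + 1) → RatFunc K)) = ijSet K (r + 1) (p.1 + 1) (p.2 + 1)

lemma IsPairFamily.mem_iff {N : Fin (r + 1) × Fin (r + 1) → Submodule Λ (Fin (r + 1) → RatFunc K)}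
    (hN : IsPairFamily N) {p : Fin (r + 1) × Fin (r + 1)} (hp : p.1 < p.2)
    {v : Fin (r + 1) → RatFunc K} :
    v ∈ N p ↔ ∀ k, ∃ q : K[X], X ^ level p k ∣ q ∧ v k = algebraMap K[X] (RatFunc K) q := by
  rw [← SetLike.mem_coe, hN p hp]
  refine forall_congr' fun k => ?_
  rw [dExp_eq_level, mem_xPow_natCast]

variable {M : Type*} [AddCommGroup M] [Module Λ M] [Module K[X] M] [IsScalarTower K[X] Λ M]
  (hΛ : (Λ : Set (Matrix _ _ (RatFunc K))) = lambdaCarrier K (r + 1))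

variable (M) in
/-- The `0`-th component `e_{00} M` of a `Λ`-module, as a `K[x]`-module. -/
abbrev firstComponent : Submodule K[X] M :=
  LinearMap.range (DistribSMul.toLinearMap K[X] M (firstRowUnit hΛ 0))

variable (M) in
/-- The map `e_{0k} : M → e_{00} M`. -/
def toFirstComponent (k : Fin (r + 1)) : M →ₗ[K[X]] firstComponent M hΛ :=
  (DistribSMul.toLinearMap K[X] M (firstRowUnit hΛ k)).codRestrict _ fun m =>
    ⟨firstRowUnit hΛ k • m, by
      rw [DistribSMul.toLinearMap_apply, ← mul_smul, firstRowUnit_zero_mul,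
        DistribSMul.toLinearMap_apply]⟩

lemma coe_toFirstComponent (k : Fin (r + 1)) (m : M) :
    (toFirstComponent M hΛ k m : M) = firstRowUnit hΛ k • m :=
  rfl

lemma toFirstComponent_matrixUnit_smul {j k : Fin (r + 1)} {d : ℕ} (h : cExp (r + 1) k j ≤ d)
    (m : M) :
    toFirstComponent M hΛ k (matrixUnit hΛ k j d h • m) =
      (X ^ d : K[X]) • toFirstComponent M hΛ j m := by
  ext
  rw [Submodule.coe_smul, coe_toFirstComponent, coe_toFirstComponent, ← mul_smul, ← smul_assoc,
    firstRowUnit_mul_matrixUnit]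

lemma toFirstComponent_matrixUnit_smul_of_ne {i j k : Fin (r + 1)} (hki : k ≠ i) {d : ℤ}
    (h : cExp (r + 1) i j ≤ d) (m : M) :
    toFirstComponent M hΛ k (matrixUnit hΛ i j d h • m) = 0 := by
  ext
  rw [coe_toFirstComponent, ← mul_smul, firstRowUnit_mul_matrixUnit_of_ne hΛ hki, zero_smul,
    Submodule.coe_zero]

lemma exists_X_smul_toFirstComponent (k : Fin (r + 1)) (x : Λ) :
    ∃ q : Fin (r + 1) → K[X],
      (∀ j, algebraMap K[X] (RatFunc K) (q j) = RatFunc.X * (x : Matrix _ _ (RatFunc K)) k j) ∧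
      ∀ m : M, (X : K[X]) • toFirstComponent M hΛ k (x • m) =
        ∑ j, q j • toFirstComponent M hΛ j m := by
  obtain ⟨q, hq, h⟩ := exists_X_smul_firstRowUnit_mul hΛ k x
  refine ⟨q, hq, fun m => Subtype.ext ?_⟩
  simpa [coe_toFirstComponent, Finset.sum_smul, mul_smul] using congrArg (· • m) h

lemma isLatticeChain_range_toFirstComponent :
    IsLatticeChain (X : K[X]) fun k => LinearMap.range (toFirstComponent M hΛ k) where
  antitone := by
    rintro j k hjk _ ⟨m, rfl⟩
    have h := cExp_nonpos_of_le hjk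
    exact ⟨matrixUnit hΛ j k 0 h • m, by simpa using toFirstComponent_matrixUnit_smul hΛ h m⟩
  zero_eq_top := by
    rw [LinearMap.range_eq_top]
    rintro ⟨_, m, rfl⟩
    exact ⟨m, rfl⟩
  smul_mem_succ := by
    rintro k _ ⟨m, rfl⟩
    have h := cExp_succ_castSucc_le k
    exact ⟨matrixUnit hΛ _ _ 1 h • m, by simpa using toFirstComponent_matrixUnit_smul hΛ h m⟩
  sq_smul_mem := by
    rintro k ⟨_, m, rfl⟩
    exact ⟨matrixUnit hΛ k 0 2 (cExp_le_two _ _) • m, toFirstComponent_matrixUnit_smul hΛ _ m⟩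
  exists_eq_smul_of_mem_last := by
    rintro _ ⟨m, rfl⟩
    refine ⟨toFirstComponent M hΛ 0 (matrixUnit hΛ 0 (Fin.last r) (-1) cExp_zero_last_le • m), ?_⟩
    ext
    rw [Submodule.coe_smul, coe_toFirstComponent, coe_toFirstComponent, ← mul_smul, ← smul_assoc,
      X_smul_firstRowUnit_zero_mul]

lemma eq_zero_of_toFirstComponent_eq_zero [Module.IsTorsionFree K[X] M] {m : M}
    (h : ∀ k, toFirstComponent M hΛ k m = 0) : m = 0 := by
  have hX : (X ^ 2 : K[X]) • m = 0 := by
    rw [← one_smul Λ m, ← smul_assoc, X_sq_smul_one_eq_sum hΛ, Finset.sum_smul]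
    refine Finset.sum_eq_zero fun k _ => ?_
    rw [mul_smul, ← coe_toFirstComponent, h, Submodule.coe_zero, smul_zero]
  exact (smul_eq_zero_iff_right (pow_ne_zero 2 X_ne_zero)).1 hX

lemma exists_forall_toFirstComponent_eq (u : Fin (r + 1) → M) :
    ∃ m, ∀ k, toFirstComponent M hΛ k m = toFirstComponent M hΛ k (u k) := by
  refine ⟨∑ j, matrixUnit hΛ j j 0 (cExp_nonpos_of_le le_rfl) • u j, fun k => ?_⟩
  rw [map_sum, Finset.sum_eq_single k
    (fun j _ hj => toFirstComponent_matrixUnit_smul_of_ne hΛ hj.symm _ _) (by simp)]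
  simpa using toFirstComponent_matrixUnit_smul hΛ (d := 0) (cExp_nonpos_of_le le_rfl) (u k)

/-- The `Λ`-linear map to the column space that applies the functional `ξ` to every component. -/
def columnMap (ξ : Module.Dual K[X] (firstComponent M hΛ)) : M →ₗ[Λ] Fin (r + 1) → RatFunc K where
  toFun m k := algebraMap K[X] (RatFunc K) (ξ (toFirstComponent M hΛ k m))
  map_add' m m' := by
    ext k
    simp
  map_smul' x m := by
    ext k
    obtain ⟨q, hq, h⟩ := exists_X_smul_toFirstComponent (M := M) hΛ k x
    apply mul_left_cancel₀ (RatFunc.X_ne_zero (K := K))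
    rw [RingHom.id_apply, coe_smul_apply, Finset.mul_sum]
    simpa [hq, mul_assoc] using congrArg (fun u => algebraMap K[X] (RatFunc K) (ξ u)) (h m)

lemma columnMap_apply (ξ : Module.Dual K[X] (firstComponent M hΛ)) (m : M) (k : Fin (r + 1)) :
    columnMap hΛ ξ m k = algebraMap K[X] (RatFunc K) (ξ (toFirstComponent M hΛ k m)) :=
  rfl

lemma pi_columnMap_coord_injective [Module.IsTorsionFree K[X] M] {ι : Type*}
    (v : Module.Basis ι K[X] (firstComponent M hΛ)) :
    Function.Injective (LinearMap.pi fun t => columnMap hΛ (v.coord t)) := by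
  rw [injective_iff_map_eq_zero]
  intro m hm
  refine eq_zero_of_toFirstComponent_eq_zero hΛ fun k => v.ext_elem fun t => ?_
  have h := congrFun (congrFun hm t) k
  rw [LinearMap.pi_apply, columnMap_apply] at h
  simpa using h

lemma IsPairFamily.exists_columnMap_coord_eq {N : Fin (r + 1) × Fin (r + 1) → Submodule Λ _}
    (hN : IsPairFamily N) {ι : Type*} [Finite ι]
    {v : Module.Basis ι K[X] (firstComponent M hΛ)} {f : ι → Fin (r + 1) × Fin (r + 1)}
    (hf : ∀ t, (f t).1 < (f t).2)
    (hv : ∀ k w, (∀ t, (X : K[X]) ^ level (f t) k ∣ v.repr w t) →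
      w ∈ LinearMap.range (toFirstComponent M hΛ k)) (u : Π t, N (f t)) :
    ∃ m, ∀ t, columnMap hΛ (v.coord t) m = u t := by
  have := Fintype.ofFinite ι
  choose q hq hu using fun t => (hN.mem_iff (hf t)).1 (u t).2
  have hrange : ∀ k, ∃ m, toFirstComponent M hΛ k m = ∑ t, q t k • v t := fun k =>
    hv k _ fun t => by rw [v.repr_sum_self]; exact hq t k
  choose w hw using hrange
  obtain ⟨m, hm⟩ := exists_forall_toFirstComponent_eq hΛ w
  refine ⟨m, fun t => funext fun k => ?_⟩
  rw [columnMap_apply, hm, hw, v.coord_apply, v.repr_sum_self, hu]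

theorem IsPairFamily.exists_linearEquiv_pi
    {N : Fin (r + 1) × Fin (r + 1) → Submodule Λ _} (hN : IsPairFamily N)
    (hΛ : (Λ : Set (Matrix _ _ (RatFunc K))) = lambdaCarrier K (r + 1))
    [Module.Finite K[X] M] [Module.IsTorsionFree K[X] M] :
    ∃ (m : ℕ) (f : Fin m → Fin (r + 1) × Fin (r + 1)), (∀ t, (f t).1 < (f t).2) ∧
      Nonempty (M ≃ₗ[Λ] Π t, N (f t)) := by
  obtain ⟨v, f, hf, hv⟩ := (isLatticeChain_range_toFirstComponent (M := M) hΛ).exists_adapted_basis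
    (PrincipalIdealRing.isMaximal_of_irreducible irreducible_X)
    (Module.finBasis K[X] (firstComponent M hΛ))
  let Φ : M →ₗ[Λ] Π t, N (f t) := LinearMap.pi fun t =>
    (columnMap hΛ (v.coord t)).codRestrict (N (f t)) fun m =>
      (hN.mem_iff (hf t)).2 fun k => ⟨_, (hv k _).1 ⟨m, rfl⟩ t, rfl⟩
  refine ⟨_, f, hf, ⟨LinearEquiv.ofBijective Φ ⟨fun m m' h => ?_, fun u => ?_⟩⟩⟩
  · exact pi_columnMap_coord_injective hΛ v
      (funext fun t => congrArg Subtype.val (congrFun h t))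
  · obtain ⟨m, hm⟩ := hN.exists_columnMap_coord_eq hΛ hf (fun k w => (hv k w).2) u
    exact ⟨m, funext fun t => Subtype.ext (hm t)⟩

end Existence

section Uniqueness

variable {K : Type*} [Field K] {r : ℕ}
  {Λ : Subalgebra K[X] (Matrix (Fin (r + 1)) (Fin (r + 1)) (RatFunc K))}
  {N : Fin (r + 1) × Fin (r + 1) → Submodule Λ (Fin (r + 1) → RatFunc K)}
  {p q : Fin (r + 1) × Fin (r + 1)}

lemma le_of_level_le {α : Type*} [LinearOrder α] {p q : α × α} (hq : q.1 ≤ q.2)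
    (h : ∀ k, level q k ≤ level p k) : p ≤ q := by
  have hfst := h p.1
  have hsnd := h p.2
  exact ⟨by grind [level], by grind [level]⟩

lemma algebraMap_smul_column (c : K[X]) (v : Fin (r + 1) → RatFunc K) :
    algebraMap K[X] Λ c • v = c • v := by
  ext k
  rw [coe_smul_apply, Finset.sum_eq_single k]
  · simp [Matrix.algebraMap_matrix_apply, Algebra.smul_def]
  · intro j _ hj
    simp [Matrix.algebraMap_matrix_apply, hj.symm]
  · simp

lemma firstRowUnit_smul (hΛ : (Λ : Set (Matrix _ _ (RatFunc K))) = lambdaCarrier K (r + 1))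
    (k : Fin (r + 1)) (v : Fin (r + 1) → RatFunc K) :
    firstRowUnit hΛ k • v = Pi.single 0 (v k) := by
  ext j
  rw [coe_smul_apply]
  simp [Matrix.single_apply, Pi.single_apply, ite_and, eq_comm]

namespace IsPairFamily

lemma single_X_pow_level_mem (hN : IsPairFamily N) (hp : p.1 < p.2) (k : Fin (r + 1)) :
    (Pi.single k (algebraMap K[X] (RatFunc K) (X ^ level p k)) : Fin (r + 1) → RatFunc K) ∈
      N p := by
  refine (hN.mem_iff hp).2 fun j => ?_
  obtain rfl | hj := eq_or_ne j k
  · exact ⟨_, dvd_rfl, by simp⟩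
  · exact ⟨0, dvd_zero _, by simp [hj]⟩

/-- The first standard basis vector as an element of `N p`. It determines the homomorphisms out of
`N p`, since every `e_{0k} • w` is a `K[x]`-multiple of it. -/
def basisVector (hN : IsPairFamily N) (hp : p.1 < p.2) : N p :=
  ⟨Pi.single 0 1, by simpa [level] using hN.single_X_pow_level_mem hp 0⟩

lemma exists_multiplier (hN : IsPairFamily N)
    (hΛ : (Λ : Set (Matrix _ _ (RatFunc K))) = lambdaCarrier K (r + 1)) (hp : p.1 < p.2)
    (hq : q.1 < q.2) (φ : N p →ₗ[Λ] N q) :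
    ∃ c : K[X], ∀ w, (φ w : Fin (r + 1) → RatFunc K) = c • (w : Fin (r + 1) → RatFunc K) := by
  obtain ⟨c, -, hc⟩ := (hN.mem_iff hq).1 (φ (hN.basisVector hp)).2 0
  refine ⟨c, fun w => funext fun k => ?_⟩
  obtain ⟨d, -, hd⟩ := (hN.mem_iff hp).1 w.2 k
  have hw : firstRowUnit hΛ k • w = algebraMap K[X] Λ d • hN.basisVector hp := by
    ext1
    rw [Submodule.coe_smul, Submodule.coe_smul, firstRowUnit_smul, algebraMap_smul_column, hd,
      basisVector, ← Pi.single_smul, Algebra.smul_def, mul_one]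
  have hφ := congrArg (fun u => (φ u : Fin (r + 1) → RatFunc K) 0) hw
  simp only [map_smul, Submodule.coe_smul, firstRowUnit_smul, algebraMap_smul_column,
    Pi.single_eq_same, Pi.smul_apply, hc] at hφ
  rw [hφ, Pi.smul_apply, hd, Algebra.smul_def, Algebra.smul_def, mul_comm]

lemma le_of_coeff_zero_ne_zero (hN : IsPairFamily N) (hp : p.1 < p.2) (hq : q.1 < q.2) {c : K[X]}
    (hc : ∀ w : N p, c • (w : Fin (r + 1) → RatFunc K) ∈ N q) (hc₀ : c.coeff 0 ≠ 0) : p ≤ q := by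
  refine le_of_level_le hq.le fun k => ?_
  obtain ⟨d, hdvd, hd⟩ := (hN.mem_iff hq).1 (hc ⟨_, hN.single_X_pow_level_mem hp k⟩) k
  rw [Pi.smul_apply, Subtype.coe_mk, Pi.single_eq_same, Algebra.smul_def, ← map_mul] at hd
  rw [← RatFunc.algebraMap_injective K hd] at hdvd
  have hndvd : ¬ X ∣ c := mt X_dvd_iff.1 hc₀
  exact (pow_dvd_pow_iff X_ne_zero not_isUnit_X).1
    ((prime_X.coprime_iff_not_dvd.2 hndvd).pow_left.dvd_of_dvd_mul_left hdvd)

end IsPairFamily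

variable {T S : Type*} [Fintype T] {f : T → Fin (r + 1) × Fin (r + 1)}
  {g : S → Fin (r + 1) × Fin (r + 1)}

/-- The map `φ` between products of modules `(i, j)` acts as the matrix `P` of multipliers. -/
def Represents (P : Matrix T S K[X]) (φ : (Π t, N (f t)) → Π s, N (g s)) : Prop :=
  ∀ w s, (φ w s : Fin (r + 1) → RatFunc K) = ∑ t, P t s • (w t : Fin (r + 1) → RatFunc K)

lemma IsPairFamily.exists_represents (hN : IsPairFamily N)
    (hΛ : (Λ : Set (Matrix _ _ (RatFunc K))) = lambdaCarrier K (r + 1))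
    (hf : ∀ t, (f t).1 < (f t).2) (hg : ∀ s, (g s).1 < (g s).2)
    (φ : (Π t, N (f t)) →ₗ[Λ] Π s, N (g s)) :
    ∃ P : Matrix T S K[X], Represents P φ ∧ ∀ t s, (P t s).coeff 0 ≠ 0 → f t ≤ g s := by
  classical
  choose P hP using fun t s => hN.exists_multiplier hΛ (hf t) (hg s)
    (LinearMap.proj s ∘ₗ φ ∘ₗ LinearMap.single Λ (fun t => N (f t)) t)
  refine ⟨P, fun w s => ?_, fun t s =>
    hN.le_of_coeff_zero_ne_zero (hf t) (hg s) fun w => hP t s w ▸ Subtype.prop _⟩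
  conv_lhs => rw [← Finset.univ_sum_single w]
  simp [← hP]

lemma IsPairFamily.mul_eq_one [Fintype S] [DecidableEq T] (hN : IsPairFamily N)
    (hf : ∀ t, (f t).1 < (f t).2) {φ : (Π t, N (f t)) → Π s, N (g s)}
    {ψ : (Π s, N (g s)) → Π t, N (f t)} (hψφ : ∀ w, ψ (φ w) = w) {P : Matrix T S K[X]}
    {Q : Matrix S T K[X]} (hP : Represents P φ) (hQ : Represents Q ψ) : P * Q = 1 := by
  ext1 t t'
  obtain ⟨e, he⟩ : ∃ e : Π t, N (f t), ∀ t'', (e t'' : Fin (r + 1) → RatFunc K) 0 =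
      algebraMap K[X] (RatFunc K) ((1 : Matrix T T K[X]) t t'') := by
    refine ⟨Pi.single t (hN.basisVector (hf t)), fun t'' => ?_⟩
    obtain rfl | ht := eq_or_ne t t''
    · simp [basisVector]
    · simp [ht, ht.symm]
  have h := congrArg (fun w => (w t' : Fin (r + 1) → RatFunc K) 0) (hψφ e)
  simp only [hQ _ _, hP _ _, Finset.sum_apply, Pi.smul_apply, he, Algebra.smul_def (A := RatFunc K),
    ← map_mul, ← map_sum] at h
  simpa [Matrix.one_apply, Matrix.mul_apply, mul_comm] using RatFunc.algebraMap_injective K h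

theorem IsPairFamily.card_fiber_eq [Fintype S] (hN : IsPairFamily N)
    (hΛ : (Λ : Set (Matrix _ _ (RatFunc K))) = lambdaCarrier K (r + 1))
    (hf : ∀ t, (f t).1 < (f t).2) (hg : ∀ s, (g s).1 < (g s).2)
    (φ : (Π t, N (f t)) ≃ₗ[Λ] Π s, N (g s)) (p : Fin (r + 1) × Fin (r + 1)) :
    Fintype.card {t // f t = p} = Fintype.card {s // g s = p} := by
  classical
  obtain ⟨P, hP, hP_le⟩ := hN.exists_represents hΛ hf hg φ.toLinearMap
  obtain ⟨Q, hQ, hQ_le⟩ := hN.exists_represents hΛ hg hf φ.symm.toLinearMap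
  have hPQ : P * Q = 1 := hN.mul_eq_one hf φ.symm_apply_apply hP hQ
  have hQP : Q * P = 1 := hN.mul_eq_one hg φ.apply_symm_apply hQ hP
  refine card_fiber_eq_of_triangular (P := P.map constantCoeff) (Q := Q.map constantCoeff)
    ?_ ?_ (fun t s h => hP_le t s (by simpa using h)) (fun s t h => hQ_le s t (by simpa using h)) p
  · rw [← Matrix.map_mul, hPQ, Matrix.map_one _ (map_zero _) (map_one _)]
  · rw [← Matrix.map_mul, hQP, Matrix.map_one _ (map_zero _) (map_one _)]

end Uniqueness

theorem statement5_general {K : Type*} [Field K] {r : ℕ}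
    {Λ : Subalgebra K[X] (Matrix (Fin (r + 1)) (Fin (r + 1)) (RatFunc K))}
    (hΛ : (Λ : Set (Matrix (Fin (r + 1)) (Fin (r + 1)) (RatFunc K))) = lambdaCarrier K (r + 1))
    {E : ℕ → ℕ → Submodule Λ (Fin (r + 1) → RatFunc K)}
    (hE : ∀ i j : ℕ, 1 ≤ i → i < j → j ≤ r + 1 →
      (E i j : Set (Fin (r + 1) → RatFunc K)) = ijSet K (r + 1) i j)
    (M : Type*) [AddCommGroup M] [Module Λ M] [Module K[X] M] [IsScalarTower K[X] Λ M]
    [Module.Finite K[X] M] [Module.IsTorsionFree K[X] M] :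
    ∃! l : Fin (r + 1) → Fin (r + 1) → ℕ,
      (∀ i j : Fin (r + 1), ¬ i < j → l i j = 0) ∧
      Nonempty (M ≃ₗ[Λ] ⨁ p : Fin (r + 1) × Fin (r + 1),
        (Fin (l p.1 p.2) → E ((p.1 : ℕ) + 1) ((p.2 : ℕ) + 1))) := by
  let N (p : Fin (r + 1) × Fin (r + 1)) : Submodule Λ _ := E (p.1 + 1) (p.2 + 1)
  have hN : IsPairFamily N := fun p hp => hE _ _ (by lia) (by simpa using hp) (by lia)
  obtain ⟨m, f, hf, ⟨φ⟩⟩ := hN.exists_linearEquiv_pi (M := M) hΛ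
  refine ⟨fun i j => Fintype.card {t // f t = (i, j)}, ⟨fun i j hij => ?_, ⟨?_⟩⟩, ?_⟩
  · exact Fintype.card_eq_zero_iff.2 ⟨fun t => hij (by simpa [t.2] using hf t)⟩
  · exact φ ≪≫ₗ piEquivDirectSum (fun p => N p) f _ fun _ => rfl
  · rintro l ⟨hl, ⟨χ⟩⟩
    let g : (Σ p : Fin (r + 1) × Fin (r + 1), Fin (l p.1 p.2)) → _ := Sigma.fst
    have hg : ∀ s, (g s).1 < (g s).2 := fun s => by
      by_contra h
      exact (Fin.cast (hl _ _ h) s.2).elim0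
    have hcard := card_fiber_sigma_fst fun p : Fin (r + 1) × Fin (r + 1) => l p.1 p.2
    let ω := piEquivDirectSum (R := Λ) (fun p => N p) g _ hcard
    ext i j
    rw [hN.card_fiber_eq hΛ hf hg (φ.symm ≪≫ₗ χ ≪≫ₗ ω.symm) (i, j)]
    exact (hcard (i, j)).symm

/-- Every Cohen–Macaulay `Λ`-module is isomorphic to a finite direct sum
`⊕_{1 ≤ i < j ≤ n} (i,j)^{l_{ij}}`, with uniquely determined multiplicities `l_{ij}`.
Here multiplicities are indexed by `(i, j) : Fin n × Fin n` (0-based), the pair `(i,j)`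
corresponding to the module `(i+1, j+1)` (1-based); the multiplicity is required to vanish
unless `i < j`. -/
theorem statement5 (K : Type) [Field K] (n : ℕ) (hn : 3 ≤ n)
    (Λ : Subalgebra (Polynomial K) (Matrix (Fin n) (Fin n) (RatFunc K)))
    (hΛ : (Λ : Set (Matrix (Fin n) (Fin n) (RatFunc K))) = lambdaCarrier K n)
    (E : ℕ → ℕ → Submodule ↥Λ (Fin n → RatFunc K))
    (hE : ∀ i j : ℕ, 1 ≤ i → i < j → j ≤ n →
      (E i j : Set (Fin n → RatFunc K)) = ijSet K n i j)
    (M : Type u) [AddCommGroup M] [Module ↥Λ M]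
    [Module (Polynomial K) M] [IsScalarTower (Polynomial K) ↥Λ M]
    (hfin : Module.Finite (Polynomial K) M)
    (htf : NoZeroSMulDivisors (Polynomial K) M) :
    ∃! l : Fin n → Fin n → ℕ,
      (∀ i j : Fin n, ¬ i < j → l i j = 0) ∧
      Nonempty (M ≃ₗ[↥Λ]
        (⨁ p : Fin n × Fin n, (Fin (l p.1 p.2) → ↥(E ((p.1 : ℕ) + 1) ((p.2 : ℕ) + 1))))) := by
  obtain ⟨r, rfl⟩ : ∃ r, n = r + 1 := ⟨n - 1, by lia⟩
  exact statement5_general hΛ hE M
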